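/- Let k be an algebraically closed field of characteristic zero. Every minimal prime of the ideal J_m ⊆ R has height m+1; in particular, the m-th jet scheme of X is pure dimensional of codimension m+1 in affine space of dimension n(m+1). -/

import Mathlib

/-- The polynomial ring `R = k[x_i^(j) : 1 ≤ i ≤ n, 0 ≤ j ≤ m]` in `n(m+1)` variables;
the variable `x_i^(j)` is `MvPolynomial.X (i, j)`. -/
abbrev JetRing (k : Type*) [Field k] (m n : ℕ) : Type _ :=
  MvPolynomial (Fin n × Fin (m + 1)) k

/-- `jetGen k m n r hrn j` is the generator `g_j`, i.e. the coefficient of `t^j` in the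
product `∏_{i=1}^{r} (x_i^(0) + x_i^(1) t + ⋯ + x_i^(m) t^m)`. -/
noncomputable def jetGen (k : Type*) [Field k] (m n r : ℕ) (hrn : r ≤ n) (j : ℕ) :
    JetRing k m n :=
  Polynomial.coeff
    (∏ i : Fin r, ∑ l : Fin (m + 1),
      Polynomial.C (MvPolynomial.X (Fin.castLE hrn i, l)) * Polynomial.X ^ (l : ℕ)) j

/-- The ideal `J_m = (g_0, …, g_m)` defining the `m`-th jet scheme of `x_1 ⋯ x_r = 0`. -/
noncomputable def jetIdeal (k : Type*) [Field k] (m n r : ℕ) (hrn : r ≤ n) :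
    Ideal (JetRing k m n) :=
  Ideal.span (jetGen k m n r hrn '' Set.Iic m)

/-- The ideal `P(m; t_1, …, t_r) = (x_i^(j) : 1 ≤ i ≤ r, 0 ≤ j ≤ t_i - 1)`. -/
noncomputable def compPrime (k : Type*) [Field k] (m n r : ℕ) (hrn : r ≤ n)
    (t : Fin r → ℕ) : Ideal (JetRing k m n) :=
  Ideal.span {p | ∃ (i : Fin r) (j : Fin (m + 1)), (j : ℕ) < t i ∧
    p = MvPolynomial.X (Fin.castLE hrn i, j)}

/-- The length of a module, valued in `ℕ∞`: the supremum of lengths of strictly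
increasing chains of submodules. -/
noncomputable def moduleLength (R M : Type*) [Ring R] [AddCommGroup M] [Module R M] : ℕ∞ :=
  Order.height (⊤ : Submodule R M)

namespace MvPolynomial

variable {σ k : Type*} [Field k]

/-- Setting the variables in `S` to zero. -/
noncomputable def killVars (k : Type*) [Field k] {σ : Type*} (S : Finset σ) :
    MvPolynomial σ k →ₐ[k] MvPolynomial σ k :=
  open Classical in aeval fun i => if i ∈ S then 0 else X i

lemma killVars_X_of_mem {S : Finset σ} {i : σ} (h : i ∈ S) :
    killVars k S (X i) = 0 := by
  simp [killVars, h]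

lemma killVars_X_of_notMem {S : Finset σ} {i : σ} (h : i ∉ S) :
    killVars k S (X i) = X i := by
  simp [killVars, h]

lemma ker_killVars_le {S : Finset σ} {Q : Ideal (MvPolynomial σ k)}
    (h : ∀ i ∈ S, (X i : MvPolynomial σ k) ∈ Q) : RingHom.ker (killVars k S) ≤ Q := by
  intro p hp
  have key : (Ideal.Quotient.mkₐ k Q).comp (killVars k S) = Ideal.Quotient.mkₐ k Q := by
    ext i
    by_cases hi : i ∈ S
    · simpa [killVars_X_of_mem hi] using
        (Ideal.Quotient.eq_zero_iff_mem.mpr (h i hi)).symm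
    · simp [killVars_X_of_notMem hi]
  have hp' := DFunLike.congr_fun key p
  rw [AlgHom.comp_apply, (RingHom.mem_ker).mp hp, map_zero] at hp'
  exact Ideal.Quotient.eq_zero_iff_mem.mp hp'.symm

lemma card_le_height_ker_killVars (S : Finset σ) :
    (S.card : ℕ∞) ≤ (RingHom.ker (killVars k S)).height := by
  classical
  induction S using Finset.induction_on with
  | empty => simp
  | insert a S ha ih =>
    have : (RingHom.ker (killVars k S)).IsPrime := RingHom.ker_isPrime _
    have : (RingHom.ker (killVars k (insert a S))).IsPrime := RingHom.ker_isPrime _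
    have hlt : RingHom.ker (killVars k S) < RingHom.ker (killVars k (insert a S)) := by
      refine lt_of_le_of_ne (ker_killVars_le fun i hi =>
        killVars_X_of_mem (Finset.mem_insert_of_mem hi)) fun h => ?_
      have hX : (X a : MvPolynomial σ k) ∈ RingHom.ker (killVars k S) :=
        h ▸ killVars_X_of_mem (Finset.mem_insert_self a S)
      rw [RingHom.mem_ker, killVars_X_of_notMem ha] at hX
      exact X_ne_zero a hX
    rw [Finset.card_insert_of_notMem ha, Nat.cast_add, Nat.cast_one]
    exact (add_le_add_left ih 1).trans (Ideal.height_add_one_le_of_lt_of_isPrime hlt)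

/-- An ideal containing the variables in `S` has height at least the cardinality of `S`. -/
lemma card_le_height_of_X_mem {S : Finset σ} {Q : Ideal (MvPolynomial σ k)}
    (h : ∀ i ∈ S, (X i : MvPolynomial σ k) ∈ Q) : (S.card : ℕ∞) ≤ Q.height :=
  (card_le_height_ker_killVars S).trans (Ideal.height_mono (ker_killVars_le h))

end MvPolynomial

lemma Polynomial.natTrailingDegree_prod {ι D : Type*} [CommRing D] [IsDomain D]
    (s : Finset ι) (F : ι → Polynomial D) (hF : ∀ i ∈ s, F i ≠ 0) :
    (∏ i ∈ s, F i).natTrailingDegree = ∑ i ∈ s, (F i).natTrailingDegree := by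
  classical
  induction s using Finset.induction_on with
  | empty => simp
  | insert a s ha ih =>
    have hs : ∀ i ∈ s, F i ≠ 0 := fun i hi => hF i (Finset.mem_insert_of_mem hi)
    rw [Finset.prod_insert ha, Finset.sum_insert ha, natTrailingDegree_mul
      (hF a (Finset.mem_insert_self a s)) (Finset.prod_ne_zero_iff.mpr hs), ih hs]

/-- If a product of truncated power series over a domain vanishes to order `m + 1`, then the
factors have in total at least `m + 1` vanishing coefficients. -/
lemma Polynomial.le_sum_card_coeff_eq_zero {ι D : Type*} [Fintype ι] [CommRing D] [IsDomain D]
    [DecidableEq D] (m : ℕ) (F : ι → Polynomial D) (hdeg : ∀ i, (F i).natDegree ≤ m)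
    (h : ∀ j ≤ m, (∏ i, F i).coeff j = 0) :
    m + 1 ≤ ∑ i, (Finset.univ.filter fun l : Fin (m + 1) => (F i).coeff l = 0).card := by
  by_cases h0 : ∃ i, F i = 0
  · obtain ⟨i, hi⟩ := h0
    refine le_trans ?_ (Finset.single_le_sum (fun _ _ => Nat.zero_le _) (Finset.mem_univ i))
    simp [hi]
  push Not at h0
  have hle : m + 1 ≤ (∏ i, F i).natTrailingDegree :=
    le_natTrailingDegree (Finset.prod_ne_zero_iff.mpr fun i _ => h0 i)
      fun j hj => h j (Nat.lt_succ_iff.mp hj)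
  rw [natTrailingDegree_prod _ _ fun i _ => h0 i] at hle
  refine hle.trans (Finset.sum_le_sum fun i _ => ?_)
  have htm : (F i).natTrailingDegree ≤ m := (natTrailingDegree_le_natDegree _).trans (hdeg i)
  calc (F i).natTrailingDegree
      = (Finset.Iio (⟨(F i).natTrailingDegree, Nat.lt_succ_of_le htm⟩ : Fin (m + 1))).card := by
        simp
    _ ≤ _ := Finset.card_le_card fun l hl => by
        rw [Finset.mem_filter_univ]
        exact coeff_eq_zero_of_lt_natTrailingDegree (Fin.lt_def.mp (Finset.mem_Iio.mp hl))

/-- A prime containing the jet ideal contains at least `m + 1` of the variables. -/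
lemma exists_card_X_mem_of_jetIdeal_le {k : Type*} [Field k] {m n r : ℕ} (hrn : r ≤ n)
    {Q : Ideal (JetRing k m n)} [Q.IsPrime] (hQ : jetIdeal k m n r hrn ≤ Q) :
    ∃ S : Finset (Fin n × Fin (m + 1)), m + 1 ≤ S.card ∧
      ∀ p ∈ S, (MvPolynomial.X p : JetRing k m n) ∈ Q := by
  classical
  let φ := Ideal.Quotient.mk Q
  let F : Fin r → Polynomial (JetRing k m n ⧸ Q) := fun i => ∑ l : Fin (m + 1),
    Polynomial.C (φ (MvPolynomial.X (Fin.castLE hrn i, l))) * Polynomial.X ^ (l : ℕ)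
  have hcoeff (i : Fin r) (l : Fin (m + 1)) :
      (F i).coeff l = φ (MvPolynomial.X (Fin.castLE hrn i, l)) := by
    simp [F, Polynomial.coeff_X_pow, ← Fin.ext_iff]
  have hdeg (i : Fin r) : (F i).natDegree ≤ m :=
    Polynomial.natDegree_sum_le_of_forall_le _ _ fun l _ =>
      (Polynomial.natDegree_C_mul_X_pow_le _ _).trans (Nat.lt_succ_iff.mp l.2)
  have hprod (j : ℕ) (hj : j ≤ m) : (∏ i, F i).coeff j = 0 := by
    have hmem : jetGen k m n r hrn j ∈ Q := hQ (Ideal.subset_span ⟨j, hj, rfl⟩)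
    rw [← Ideal.Quotient.eq_zero_iff_mem, jetGen, ← Polynomial.coeff_map] at hmem
    simpa [F, φ, Polynomial.map_prod, Polynomial.map_sum] using hmem
  refine ⟨(Finset.univ.sigma fun i : Fin r =>
      Finset.univ.filter fun l : Fin (m + 1) => (F i).coeff l = 0).image
        fun p => (Fin.castLE hrn p.1, p.2), ?_, ?_⟩
  · rw [Finset.card_image_of_injective, Finset.card_sigma]
    · exact Polynomial.le_sum_card_coeff_eq_zero m F hdeg hprod
    · rintro ⟨i, l⟩ ⟨i', l'⟩ h
      simpa using h
  · intro p hp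
    obtain ⟨⟨i, l⟩, hil, rfl⟩ := Finset.mem_image.mp hp
    have h0 := (Finset.mem_filter.mp (Finset.mem_sigma.mp hil).2).2
    rw [hcoeff] at h0
    exact Ideal.Quotient.eq_zero_iff_mem.mp h0

/-- Over an algebraically closed field of characteristic zero, every minimal prime of
`J_m` has height `m + 1`; in particular the `m`-th jet scheme of `X` is pure
dimensional of codimension `m + 1` in affine space of dimension `n(m + 1)`. -/
theorem height_minimalPrimes_jetIdeal
    (k : Type*) [Field k] [IsAlgClosed k] [CharZero k]
    (m n r : ℕ) (hr : 1 ≤ r) (hrn : r ≤ n)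
    (Q : Ideal (JetRing k m n)) (hQ : Q ∈ (jetIdeal k m n r hrn).minimalPrimes) :
    Order.height (⟨Q, hQ.1.1⟩ : PrimeSpectrum (JetRing k m n)) = (m + 1 : ℕ∞) := by
  have : Q.IsPrime := hQ.1.1
  rw [← PrimeSpectrum.height_eq_orderHeight]
  refine le_antisymm ?_ ?_
  · refine (Ideal.height_le_card_of_mem_minimalPrimes_span
      ((Set.finite_Iic m).image _) hQ).trans ?_
    have hcard := Set.ncard_image_le (f := jetGen k m n r hrn) (Set.finite_Iic m)
    rw [Set.ncard_eq_toFinset_card' (Set.Iic m), Set.toFinset_Iic, Nat.card_Iic] at hcard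
    exact_mod_cast hcard
  · obtain ⟨S, hS, hmem⟩ := exists_card_X_mem_of_jetIdeal_le hrn hQ.1.2
    refine le_trans ?_ (MvPolynomial.card_le_height_of_X_mem hmem)
    exact_mod_cast hS
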